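/- For every integer k ≥ 1 there exists an integer N = R_s(k) such that for every n ≥ N, no Condorcet domain on an n-element set is (k, s)-abundant for any s > 2^{k-1}; equivalently, every Condorcet domain D on an n-element set X with n ≥ N has a k-element subset A ⊆ X such that the restriction of D to A contains at most 2^{k-1} distinct linear orders. -/

import Mathlib

/-- `r` is a strict total order on `X`, supported on `X` (i.e. `r` never relates
elements outside `X`). -/
def IsLinearOrderOn {α : Type*} (X : Set α) (r : α → α → Prop) : Prop :=
  (∀ a b, r a b → a ∈ X ∧ b ∈ X) ∧
  (∀ a ∈ X, ¬ r a a) ∧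
  (∀ a ∈ X, ∀ b ∈ X, ∀ c ∈ X, r a b → r b c → r a c) ∧
  (∀ a ∈ X, ∀ b ∈ X, a ≠ b → r a b ∨ r b a)

/-- A domain on `X` is a set of linear orders on `X`. -/
def IsDomainOn {α : Type*} (X : Set α) (D : Set (α → α → Prop)) : Prop :=
  ∀ r ∈ D, IsLinearOrderOn X r

/-- The restriction of the order `r` to the subset `A`. -/
def restrictRel {α : Type*} (A : Set α) (r : α → α → Prop) : α → α → Prop :=
  fun a b => a ∈ A ∧ b ∈ A ∧ r a b

/-- The restriction of the domain `D` to the subset `A`: the set of linear orders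
on `A` induced by the orders in `D`. -/
def restrictDom {α : Type*} (A : Set α) (D : Set (α → α → Prop)) :
    Set (α → α → Prop) :=
  restrictRel A '' D

/-- `D` is `(k,s)`-abundant on `X`: its restriction to every `k`-element subset of `X`
contains at least `s` distinct linear orders. -/
def IsAbundant {α : Type*} (X : Set α) (D : Set (α → α → Prop)) (k s : ℕ) : Prop :=
  ∀ A : Set α, A ⊆ X → A.ncard = k → s ≤ (restrictDom A D).ncard

/-- `D` is exactly `(k,s)`-abundant: `(k,s)`-abundant but not `(k,s+1)`-abundant. -/
def IsExactlyAbundant {α : Type*} (X : Set α) (D : Set (α → α → Prop)) (k s : ℕ) : Prop :=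
  IsAbundant X D k s ∧ ¬ IsAbundant X D k (s + 1)

/-- The number of orders in the profile `R` that rank `a` above `b`. -/
noncomputable def majCount {α : Type*} (R : List (α → α → Prop)) (a b : α) : ℕ :=
  Nat.card {i : Fin R.length // (R.get i) a b}

/-- More than half of the orders in the profile `R` rank `a` above `b`. -/
def MajPrefers {α : Type*} (R : List (α → α → Prop)) (a b : α) : Prop :=
  R.length < 2 * majCount R a b

/-- `D` is a Condorcet domain on `X`: it is a domain on `X` and for every profile
(list of orders from `D`) of odd length, the majority relation is transitive on `X`. -/
def IsCondorcetDomain {α : Type*} (X : Set α) (D : Set (α → α → Prop)) : Prop :=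
  IsDomainOn X D ∧
  ∀ R : List (α → α → Prop), (∀ r ∈ R, r ∈ D) → Odd R.length →
    ∀ a ∈ X, ∀ b ∈ X, ∀ c ∈ X,
      MajPrefers R a b → MajPrefers R b c → MajPrefers R a c

/-- A maximal Condorcet domain on `X`. -/
def IsMaximalCondorcetDomain {α : Type*} (X : Set α) (D : Set (α → α → Prop)) : Prop :=
  IsCondorcetDomain X D ∧
  ∀ D' : Set (α → α → Prop), D ⊆ D' → IsCondorcetDomain X D' → D' = D


theorem ramsey_aux (C : Type) [Fintype C] (r : ℕ) : ∀ m : ℕ, ∃ N : ℕ, ∀ (α : Type) (_ : LinearOrder α)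
    (S : Finset α), N ≤ S.card → ∀ f : List α → C, ∃ T ⊆ S, T.card = m ∧ ∃ c : C,
      ∀ l : List α, l.Pairwise (· < ·) → l.length = r → (∀ x ∈ l, x ∈ T) → f l = c := by
  classical
  induction r with
  | zero =>
    intro m
    refine ⟨m, fun α _ S hS f => ?_⟩
    obtain ⟨T, hT, hc⟩ := Finset.exists_subset_card_eq hS
    refine ⟨T, hT, hc, f [], fun l _ hl _ => ?_⟩
    rw [List.length_eq_zero_iff.mp hl]
  | succ r ih =>
    have pre : ∀ t : ℕ, ∃ N : ℕ, ∀ (α : Type) (_ : LinearOrder α)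
        (S : Finset α), N ≤ S.card → ∀ f : List α → C, ∃ T ⊆ S, T.card = t ∧ ∃ g : α → C,
        ∀ a ∈ T, ∀ l : List α, (∀ x ∈ l, a < x) → l.Pairwise (· < ·) → l.length = r →
          (∀ x ∈ l, x ∈ T) → f (a :: l) = g a := by
      intro t
      induction t with
      | zero =>
        refine ⟨0, fun α _ S hS f => ⟨∅, by simp, by simp, fun _ => f [], by simp⟩⟩
      | succ t iht =>
        obtain ⟨Nt, hNt⟩ := iht
        obtain ⟨M, hM⟩ := ih Nt
        refine ⟨M + 1, fun α _ S hS f => ?_⟩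
        have hne : S.Nonempty := by
          rw [← Finset.card_pos]; omega
        set a := S.min' hne with ha
        have haS : a ∈ S := Finset.min'_mem _ _
        have hmin : ∀ x ∈ S, a ≤ x := fun x hx => Finset.min'_le _ _ hx
        obtain ⟨T1, hT1, hT1c, c, hc⟩ := hM α _ (S.erase a)
          (by rw [Finset.card_erase_of_mem haS]; omega) (fun l => f (a :: l))
        obtain ⟨T2, hT2, hT2c, g, hg⟩ := hNt α _ T1 hT1c.ge f
        have hlt : ∀ x ∈ T2, a < x := by
          intro x hx
          have h1 := Finset.mem_erase.mp (hT1 (hT2 hx))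
          exact lt_of_le_of_ne (hmin x h1.2) (Ne.symm h1.1)
        have haT : a ∉ T2 := fun h => lt_irrefl _ (hlt a h)
        refine ⟨insert a T2, ?_, by rw [Finset.card_insert_of_notMem haT, hT2c],
          fun x => if x = a then c else g x, ?_⟩
        · intro x hx
          rcases Finset.mem_insert.mp hx with rfl | hx
          · exact haS
          · exact Finset.mem_of_mem_erase (hT1 (hT2 hx))
        · intro b hb l hbl hl hlen hlT
          have hab : a ≤ b := by
            rcases Finset.mem_insert.mp hb with h | h
            · exact h.ge
            · exact (hlt b h).le
          have hlT2 : ∀ x ∈ l, x ∈ T2 := by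
            intro x hx
            rcases Finset.mem_insert.mp (hlT x hx) with h | h
            · exact absurd (h ▸ hbl x hx) (not_lt.mpr hab)
            · exact h
          by_cases hba : b = a
          · simp only [hba, if_true]
            exact hc l hl hlen fun x hx => hT2 (hlT2 x hx)
          · simp only [hba, if_false]
            exact hg b ((Finset.mem_insert.mp hb).resolve_left hba) l hbl hl hlen hlT2
    intro m
    obtain ⟨N, hN⟩ := pre (Fintype.card C * m)
    refine ⟨N, fun α _ S hS f => ?_⟩
    obtain ⟨T, hT, hTc, g, hg⟩ := hN α _ S hS f
    have : ∃ c ∈ (Finset.univ : Finset C), m ≤ (T.filter (fun x => g x = c)).card := by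
      apply Finset.exists_le_card_fiber_of_mul_le_card_of_maps_to
      · simp
      · exact ⟨f [], Finset.mem_univ _⟩
      · rw [hTc, Finset.card_univ]
    obtain ⟨c, -, hc⟩ := this
    obtain ⟨U, hU, hUc⟩ := Finset.exists_subset_card_eq hc
    have hUT : U ⊆ T := hU.trans (Finset.filter_subset _ _)
    refine ⟨U, hUT.trans hT, hUc, c, fun l hl hlen hlU => ?_⟩
    cases l with
    | nil => simp at hlen
    | cons a l =>
      rw [List.pairwise_cons] at hl
      have haU := hlU a (by simp)
      rw [hg a (hUT haU) l hl.1 hl.2 (by simpa using hlen)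
        fun x hx => hUT (hlU x (by simp [hx]))]
      exact (Finset.mem_filter.mp (hU haU)).2

theorem restrictDom_finite {α : Type} {A : Set α} (hA : A.Finite) (D : Set (α → α → Prop)) :
    (restrictDom A D).Finite := by
  have h : ((A ×ˢ A).powerset).Finite := (hA.prod hA).finite_subsets
  refine (h.image (fun s => fun a b => (a, b) ∈ s)).subset ?_
  rintro _ ⟨r, -, rfl⟩
  refine ⟨{p | restrictRel A r p.1 p.2}, ?_, rfl⟩
  rintro ⟨a, b⟩ ⟨h1, h2, -⟩
  exact ⟨h1, h2⟩

theorem half_aux {α : Type} {A : Set α} (hA : A.Finite) (D : Set (α → α → Prop)) (a : α)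
    (P : (α → α → Prop) → Prop)
    (h : ∀ r ∈ D, ∀ r' ∈ D, P r → P r' →
      (∀ x ∈ A, x ≠ a → ∀ y ∈ A, y ≠ a → (r x y ↔ r' x y)) →
      ∀ x ∈ A, ∀ y ∈ A, r x y → r' x y) :
    (restrictDom A {r | r ∈ D ∧ P r}).ncard ≤ (restrictDom (A \ {a}) D).ncard := by
  apply Set.ncard_le_ncard_of_injOn (restrictRel (A \ {a})) _ _
    (restrictDom_finite hA.sdiff D)
  · rintro _ ⟨r, ⟨hr, -⟩, rfl⟩
    refine ⟨r, hr, ?_⟩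
    funext x y
    simp only [restrictRel, Set.mem_sdiff, eq_iff_iff]
    tauto
  · rintro _ ⟨r, ⟨hr, hP⟩, rfl⟩ _ ⟨r', ⟨hr', hP'⟩, rfl⟩ heq
    have key : ∀ x ∈ A, x ≠ a → ∀ y ∈ A, y ≠ a → (r x y ↔ r' x y) := by
      intro x hx hxa y hy hya
      have := congrFun (congrFun heq x) y
      simp only [restrictRel, Set.mem_sdiff, Set.mem_singleton_iff, eq_iff_iff] at this
      tauto
    funext x y
    have h1 := h r hr r' hr' hP hP' key x
    have h2 := h r' hr' r hr hP' hP
      (fun x hx hxa y hy hya => (key x hx hxa y hy hya).symm) x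
    simp only [restrictRel, eq_iff_iff]
    constructor
    · rintro ⟨hx, hy, h⟩
      exact ⟨hx, hy, h1 hx y hy h⟩
    · rintro ⟨hx, hy, h⟩
      exact ⟨hx, hy, h2 hx y hy h⟩

theorem step_aux {α : Type} {A : Set α} (hA : A.Finite) (D : Set (α → α → Prop)) (a b : α)
    (P Q : (α → α → Prop) → Prop) (hPQ : ∀ r ∈ D, P r ∨ Q r)
    (hP : ∀ r ∈ D, ∀ r' ∈ D, P r → P r' →
      (∀ x ∈ A, x ≠ a → ∀ y ∈ A, y ≠ a → (r x y ↔ r' x y)) →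
      ∀ x ∈ A, ∀ y ∈ A, r x y → r' x y)
    (hQ : ∀ r ∈ D, ∀ r' ∈ D, Q r → Q r' →
      (∀ x ∈ A, x ≠ b → ∀ y ∈ A, y ≠ b → (r x y ↔ r' x y)) →
      ∀ x ∈ A, ∀ y ∈ A, r x y → r' x y) (n : ℕ)
    (ha : (restrictDom (A \ {a}) D).ncard ≤ n) (hb : (restrictDom (A \ {b}) D).ncard ≤ n) :
    (restrictDom A D).ncard ≤ 2 * n := by
  have h : restrictDom A D ⊆ restrictDom A {r | r ∈ D ∧ P r} ∪ restrictDom A {r | r ∈ D ∧ Q r} := by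
    rintro _ ⟨r, hr, rfl⟩
    rcases hPQ r hr with h | h
    · exact Or.inl ⟨r, ⟨hr, h⟩, rfl⟩
    · exact Or.inr ⟨r, ⟨hr, h⟩, rfl⟩
  have h1 := Set.ncard_le_ncard h ((restrictDom_finite hA _).union (restrictDom_finite hA _))
  have h2 := Set.ncard_union_le (restrictDom A {r | r ∈ D ∧ P r}) (restrictDom A {r | r ∈ D ∧ Q r})
  have h3 := half_aux hA D a P hP
  have h4 := half_aux hA D b Q hQ
  omega

section laws
variable {α : Type} {X A : Set α} {D : Set (α → α → Prop)}

theorem top_det (hD : IsDomainOn X D) (hAX : A ⊆ X) {a : α} (haA : a ∈ A) :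
    ∀ r ∈ D, ∀ r' ∈ D, (∀ b ∈ A, b ≠ a → r a b) → (∀ b ∈ A, b ≠ a → r' a b) →
      (∀ x ∈ A, x ≠ a → ∀ y ∈ A, y ≠ a → (r x y ↔ r' x y)) →
      ∀ x ∈ A, ∀ y ∈ A, r x y → r' x y := by
  intro r hr r' hr' h h' hrr x hx y hy hxy
  obtain ⟨-, hirr, htr, htot⟩ := hD r hr
  by_cases hxa : x = a
  · subst hxa
    refine h' y hy ?_
    rintro rfl
    exact hirr _ (hAX hx) hxy
  · by_cases hya : y = a
    · subst hya
      exact absurd (htr _ (hAX hx) _ (hAX hy) _ (hAX hx) hxy (h x hx hxa)) (hirr _ (hAX hx))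
    · exact (hrr x hx hxa y hy hya).1 hxy

theorem bot_det (hD : IsDomainOn X D) (hAX : A ⊆ X) {a : α} (haA : a ∈ A) :
    ∀ r ∈ D, ∀ r' ∈ D, (∀ b ∈ A, b ≠ a → r b a) → (∀ b ∈ A, b ≠ a → r' b a) →
      (∀ x ∈ A, x ≠ a → ∀ y ∈ A, y ≠ a → (r x y ↔ r' x y)) →
      ∀ x ∈ A, ∀ y ∈ A, r x y → r' x y := by
  intro r hr r' hr' h h' hrr x hx y hy hxy
  obtain ⟨-, hirr, htr, htot⟩ := hD r hr
  by_cases hya : y = a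
  · subst hya
    refine h' x hx ?_
    rintro rfl
    exact hirr _ (hAX hx) hxy
  · by_cases hxa : x = a
    · subst hxa
      exact absurd (htr _ (hAX hx) _ (hAX hy) _ (hAX hx) hxy (h y hy hya)) (hirr _ (hAX hx))
    · exact (hrr x hx hxa y hy hya).1 hxy

theorem lawTop (hD : IsDomainOn X D) (hAX : A ⊆ X) (hA : A.Finite) {a b : α} (haA : a ∈ A)
    (hbA : b ∈ A) (hab : a ≠ b)
    (h : ∀ r ∈ D, ∀ y ∈ A, y ≠ a → y ≠ b → ¬ (r y a ∧ r y b)) (n : ℕ)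
    (ha : (restrictDom (A \ {a}) D).ncard ≤ n) (hb : (restrictDom (A \ {b}) D).ncard ≤ n) :
    (restrictDom A D).ncard ≤ 2 * n := by
  refine step_aux hA D a b _ _ ?_ (top_det hD hAX haA) (top_det hD hAX hbA) n ha hb
  intro r hr
  obtain ⟨-, hirr, htr, htot⟩ := hD r hr
  rcases htot a (hAX haA) b (hAX hbA) hab with h1 | h1
  · left
    intro x hx hxa
    by_cases hxb : x = b
    · exact hxb ▸ h1
    · refine (htot a (hAX haA) x (hAX hx) (Ne.symm hxa)).resolve_right fun h2 => ?_
      exact h r hr x hx hxa hxb ⟨h2, htr _ (hAX hx) _ (hAX haA) _ (hAX hbA) h2 h1⟩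
  · right
    intro x hx hxb
    by_cases hxa : x = a
    · exact hxa ▸ h1
    · refine (htot b (hAX hbA) x (hAX hx) (Ne.symm hxb)).resolve_right fun h2 => ?_
      exact h r hr x hx hxa hxb ⟨htr _ (hAX hx) _ (hAX hbA) _ (hAX haA) h2 h1, h2⟩

theorem lawBot (hD : IsDomainOn X D) (hAX : A ⊆ X) (hA : A.Finite) {a b : α} (haA : a ∈ A)
    (hbA : b ∈ A) (hab : a ≠ b)
    (h : ∀ r ∈ D, ∀ y ∈ A, y ≠ a → y ≠ b → ¬ (r a y ∧ r b y)) (n : ℕ)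
    (ha : (restrictDom (A \ {a}) D).ncard ≤ n) (hb : (restrictDom (A \ {b}) D).ncard ≤ n) :
    (restrictDom A D).ncard ≤ 2 * n := by
  refine step_aux hA D a b _ _ ?_ (bot_det hD hAX haA) (bot_det hD hAX hbA) n ha hb
  intro r hr
  obtain ⟨-, hirr, htr, htot⟩ := hD r hr
  rcases htot a (hAX haA) b (hAX hbA) hab with h1 | h1
  · right
    intro x hx hxb
    by_cases hxa : x = a
    · exact hxa ▸ h1
    · refine (htot b (hAX hbA) x (hAX hx) (Ne.symm hxb)).resolve_left fun h2 => ?_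
      exact h r hr x hx hxa hxb ⟨htr _ (hAX haA) _ (hAX hbA) _ (hAX hx) h1 h2, h2⟩
  · left
    intro x hx hxa
    by_cases hxb : x = b
    · exact hxb ▸ h1
    · refine (htot a (hAX haA) x (hAX hx) (Ne.symm hxa)).resolve_left fun h2 => ?_
      exact h r hr x hx hxa hxb ⟨h2, htr _ (hAX hbA) _ (hAX haA) _ (hAX hx) h1 h2⟩

theorem lawMid (hD : IsDomainOn X D) (hAX : A ⊆ X) (hA : A.Finite) {a : α} (haA : a ∈ A)
    (h : ∀ r ∈ D, ∀ b ∈ A, ∀ c ∈ A, b ≠ a → c ≠ a → b ≠ c → ¬ (r b a ∧ r a c)) (n : ℕ)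
    (ha : (restrictDom (A \ {a}) D).ncard ≤ n) :
    (restrictDom A D).ncard ≤ 2 * n := by
  refine step_aux hA D a a _ _ ?_ (top_det hD hAX haA) (bot_det hD hAX haA) n ha ha
  intro r hr
  obtain ⟨-, hirr, htr, htot⟩ := hD r hr
  by_cases hb : ∃ b ∈ A, b ≠ a ∧ r b a
  · obtain ⟨b, hb, hba, h1⟩ := hb
    right
    intro c hc hca
    by_cases hbc : b = c
    · exact hbc ▸ h1
    · refine (htot c (hAX hc) a (hAX haA) hca).resolve_right fun h2 => ?_
      exact h r hr b hb c hc hba hca hbc ⟨h1, h2⟩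
  · left
    intro c hc hca
    refine (htot c (hAX hc) a (hAX haA) hca).resolve_left fun h2 => hb ⟨c, hc, hca, h2⟩

theorem lawNT (hD : IsDomainOn X D) (hAX : A ⊆ X) (hA : A.Finite) {a : α} (haA : a ∈ A)
    (h : ∀ r ∈ D, ∀ b ∈ A, ∀ c ∈ A, b ≠ a → c ≠ a → b ≠ c → ¬ (r a b ∧ r a c)) (n : ℕ)
    (ha : (restrictDom (A \ {a}) D).ncard ≤ n) :
    (restrictDom A D).ncard ≤ 2 * n := by
  refine step_aux hA D a a _ (fun r => ∃ b ∈ A, b ≠ a ∧ r a b) ?_ (bot_det hD hAX haA) ?_ n ha ha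
  · intro r hr
    obtain ⟨-, hirr, htr, htot⟩ := hD r hr
    by_cases hb : ∃ b ∈ A, b ≠ a ∧ r a b
    · exact Or.inr hb
    · left
      intro c hc hca
      exact (htot c (hAX hc) a (hAX haA) hca).resolve_right fun h2 => hb ⟨c, hc, hca, h2⟩
  · rintro r hr r' hr' ⟨b, hb, hba, h1⟩ ⟨b', hb', hba', h1'⟩ hrr x hx y hy hxy
    have hr1 := h r hr
    have hr1' := h r' hr'
    obtain ⟨-, hirr, htr, htot⟩ := hD r hr
    obtain ⟨-, hirr', htr', htot'⟩ := hD r' hr'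
    have e : ∀ c ∈ A, c ≠ a → c ≠ b → r c a := fun c hc hca hcb =>
      (htot c (hAX hc) a (hAX haA) hca).resolve_right fun h2 =>
        hr1 c hc b hb hca hba hcb ⟨h2, h1⟩
    have e' : ∀ c ∈ A, c ≠ a → c ≠ b' → r' c a := fun c hc hca hcb =>
      (htot' c (hAX hc) a (hAX haA) hca).resolve_right fun h2 =>
        hr1' c hc b' hb' hca hba' hcb ⟨h2, h1'⟩
    have hbb : b = b' := by
      by_contra hne
      have q1 := htr _ (hAX hb') _ (hAX haA) _ (hAX hb) (e b' hb' hba' (Ne.symm hne)) h1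
      have q2 := htr' _ (hAX hb) _ (hAX haA) _ (hAX hb') (e' b hb hba hne) h1'
      have q3 := (hrr b' hb' hba' b hb hba).1 q1
      exact hirr' _ (hAX hb) (htr' _ (hAX hb) _ (hAX hb') _ (hAX hb) q2 q3)
    subst hbb
    by_cases hxa : x = a
    · subst hxa
      have hyx : y ≠ x := by
        rintro rfl
        exact hirr _ (hAX hx) hxy
      by_cases hyb : y = b
      · exact hyb ▸ h1'
      · exact absurd ⟨hxy, h1⟩ (hr1 y hy b hb hyx hba hyb)
    · by_cases hya : y = a
      · subst hya
        refine e' x hx hxa ?_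
        rintro rfl
        exact hirr _ (hAX hx) (htr _ (hAX hx) _ (hAX hy) _ (hAX hx) hxy h1)
      · exact (hrr x hx hxa y hy hya).1 hxy

theorem lawNB (hD : IsDomainOn X D) (hAX : A ⊆ X) (hA : A.Finite) {a : α} (haA : a ∈ A)
    (h : ∀ r ∈ D, ∀ b ∈ A, ∀ c ∈ A, b ≠ a → c ≠ a → b ≠ c → ¬ (r b a ∧ r c a)) (n : ℕ)
    (ha : (restrictDom (A \ {a}) D).ncard ≤ n) :
    (restrictDom A D).ncard ≤ 2 * n := by
  refine step_aux hA D a a _ (fun r => ∃ b ∈ A, b ≠ a ∧ r b a) ?_ (top_det hD hAX haA) ?_ n ha ha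
  · intro r hr
    obtain ⟨-, hirr, htr, htot⟩ := hD r hr
    by_cases hb : ∃ b ∈ A, b ≠ a ∧ r b a
    · exact Or.inr hb
    · left
      intro c hc hca
      exact (htot c (hAX hc) a (hAX haA) hca).resolve_left fun h2 => hb ⟨c, hc, hca, h2⟩
  · rintro r hr r' hr' ⟨b, hb, hba, h1⟩ ⟨b', hb', hba', h1'⟩ hrr x hx y hy hxy
    have hr1 := h r hr
    have hr1' := h r' hr'
    obtain ⟨-, hirr, htr, htot⟩ := hD r hr
    obtain ⟨-, hirr', htr', htot'⟩ := hD r' hr'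
    have e : ∀ c ∈ A, c ≠ a → c ≠ b → r a c := fun c hc hca hcb =>
      (htot c (hAX hc) a (hAX haA) hca).resolve_left fun h2 =>
        hr1 c hc b hb hca hba hcb ⟨h2, h1⟩
    have e' : ∀ c ∈ A, c ≠ a → c ≠ b' → r' a c := fun c hc hca hcb =>
      (htot' c (hAX hc) a (hAX haA) hca).resolve_left fun h2 =>
        hr1' c hc b' hb' hca hba' hcb ⟨h2, h1'⟩
    have hbb : b = b' := by
      by_contra hne
      have q1 := htr _ (hAX hb) _ (hAX haA) _ (hAX hb') h1 (e b' hb' hba' (Ne.symm hne))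
      have q2 := htr' _ (hAX hb') _ (hAX haA) _ (hAX hb) h1' (e' b hb hba hne)
      have q3 := (hrr b hb hba b' hb' hba').1 q1
      exact hirr' _ (hAX hb) (htr' _ (hAX hb) _ (hAX hb') _ (hAX hb) q3 q2)
    subst hbb
    by_cases hya : y = a
    · subst hya
      have hyx : x ≠ y := by
        rintro rfl
        exact hirr _ (hAX hx) hxy
      by_cases hyb : x = b
      · exact hyb ▸ h1'
      · exact absurd ⟨hxy, h1⟩ (hr1 x hx b hb hyx hba hyb)
    · by_cases hxa : x = a
      · subst hxa
        refine e' y hy hya ?_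
        rintro rfl
        exact hirr _ (hAX hx) (htr _ (hAX hx) _ (hAX hy) _ (hAX hx) hxy h1)
      · exact (hrr x hx hxa y hy hya).1 hxy

open Classical in
theorem majCount_three (r s t : α → α → Prop) (a b : α) : majCount [r, s, t] a b =
    (if r a b then 1 else 0) + (if s a b then 1 else 0) + (if t a b then 1 else 0) := by
  unfold majCount
  rw [Nat.card_eq_fintype_card, Fintype.card_subtype, Finset.card_filter]
  exact Fin.sum_univ_three (fun i : Fin 3 => if ([r, s, t].get i) a b then 1 else 0)

theorem no_cycle (hD : IsCondorcetDomain X D) {x y z : α} (hx : x ∈ X) (hy : y ∈ X) (hz : z ∈ X)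
    {r s t : α → α → Prop} (hr : r ∈ D) (hs : s ∈ D) (ht : t ∈ D)
    (r1 : r x y) (r2 : r y z) (s1 : s y z) (s2 : s z x) (t1 : t z x) (t2 : t x y) : False := by
  obtain ⟨hdom, hD⟩ := hD
  have := hD [r, s, t] (by simp [hr, hs, ht]) ⟨1, rfl⟩ x hx y hy z hz
  have ns : ¬ s x z := fun h =>
    (hdom s hs).2.1 x hx ((hdom s hs).2.2.1 x hx z hz x hx h s2)
  have nt : ¬ t x z := fun h =>
    (hdom t ht).2.1 x hx ((hdom t ht).2.2.1 x hx z hz x hx h t1)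
  unfold MajPrefers at this
  simp only [majCount_three, List.length_cons, List.length_nil, r1, r2, s1, t2, ns, nt, if_true,
    if_false] at this
  split_ifs at this <;> omega

/-- The six possible never conditions on a triple. -/
def TLaw (D : Set (α → α → Prop)) (c : Fin 6) (x y z : α) : Prop :=
  match c with
  | 0 => ∀ r ∈ D, ¬ (r y x ∧ r x z) ∧ ¬ (r z x ∧ r x y)
  | 1 => ∀ r ∈ D, ¬ (r y x ∧ r z x)
  | 2 => ∀ r ∈ D, ¬ (r y x ∧ r y z)
  | 3 => ∀ r ∈ D, ¬ (r x y ∧ r z y)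
  | 4 => ∀ r ∈ D, ¬ (r z x ∧ r z y)
  | 5 => ∀ r ∈ D, ¬ (r x z ∧ r z y) ∧ ¬ (r y z ∧ r z x)

theorem exists_law (hD : IsCondorcetDomain X D) {x y z : α} (hx : x ∈ X) (hy : y ∈ X) (hz : z ∈ X)
    (hxy : x ≠ y) (hyz : y ≠ z) (hxz : x ≠ z)
    {r₀ : α → α → Prop} (hr : r₀ ∈ D) (h1 : r₀ x y) (h2 : r₀ y z) : ∃ c, TLaw D c x y z := by
  have A1 : (∀ r ∈ D, ¬ (r y z ∧ r z x)) ∨ (∀ r ∈ D, ¬ (r z x ∧ r x y)) := by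
    by_contra hh
    push Not at hh
    obtain ⟨⟨s, hs, s1, s2⟩, ⟨t, ht, t1, t2⟩⟩ := hh
    exact no_cycle hD hx hy hz hr hs ht h1 h2 s1 s2 t1 t2
  have A2 : (∀ r ∈ D, ¬ (r x z ∧ r z y)) ∨ (∀ r ∈ D, ¬ (r z y ∧ r y x)) ∨
      (∀ r ∈ D, ¬ (r y x ∧ r x z)) := by
    by_contra hh
    push Not at hh
    obtain ⟨⟨r, hr, r1, r2⟩, ⟨s, hs, s1, s2⟩, ⟨t, ht, t1, t2⟩⟩ := hh
    exact no_cycle hD hx hz hy hr hs ht r1 r2 s1 s2 t1 t2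
  have tyz := fun r hr => (hD.1 r hr).2.2.2 y hy z hz hyz
  have txy := fun r hr => (hD.1 r hr).2.2.2 x hx y hy hxy
  have txz := fun r hr => (hD.1 r hr).2.2.2 x hx z hz hxz
  rcases A1 with A1 | A1 <;> rcases A2 with A2 | A2 | A2
  · exact ⟨5, fun r hr => ⟨A2 r hr, A1 r hr⟩⟩
  · refine ⟨1, fun r hr => ?_⟩
    have := A1 r hr; have := A2 r hr; have := tyz r hr
    tauto
  · refine ⟨2, fun r hr => ?_⟩
    have := A1 r hr; have := A2 r hr; have := txz r hr
    tauto
  · refine ⟨3, fun r hr => ?_⟩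
    have := A1 r hr; have := A2 r hr; have := txz r hr
    tauto
  · refine ⟨4, fun r hr => ?_⟩
    have := A1 r hr; have := A2 r hr; have := txy r hr
    tauto
  · exact ⟨0, fun r hr => ⟨A2 r hr, A1 r hr⟩⟩

theorem count_law [LinearOrder X] (hD : IsDomainOn X D) (c : Fin 6) (n : ℕ) : ∀ U : Finset X,
    U.card = n + 1 →
    (∀ x ∈ U, ∀ y ∈ U, ∀ z ∈ U, x < y → y < z → TLaw D c x.1 y.1 z.1) →
    (restrictDom (Subtype.val '' (U : Set X)) D).ncard ≤ 2 ^ n := by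
  classical
  induction n with
  | zero =>
    intro U hU _
    obtain ⟨a, rfl⟩ := Finset.card_eq_one.mp hU
    have : restrictDom (Subtype.val '' (({a} : Finset X) : Set X)) D ⊆ {fun _ _ => False} := by
      rintro _ ⟨r, hr, rfl⟩
      funext x y
      simp only [restrictRel, Finset.coe_singleton, Set.image_singleton, Set.mem_singleton_iff,
        eq_iff_iff, iff_false]
      rintro ⟨rfl, rfl, h⟩
      exact (hD r hr).2.1 _ a.2 h
    simpa using Set.ncard_le_ncard this
  | succ n ih =>
    intro U hU hlaw
    have hne : U.Nonempty := by
      rw [← Finset.card_pos]; omega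
    have hlt : U.min' hne < U.max' hne := Finset.min'_lt_max'_of_card _ (by omega)
    have hmU := U.min'_mem hne
    have hMU := U.max'_mem hne
    have hmin : ∀ x ∈ U, x ≠ U.min' hne → U.min' hne < x := fun x hx h =>
      lt_of_le_of_ne (U.min'_le x hx) (Ne.symm h)
    have hmax : ∀ x ∈ U, x ≠ U.max' hne → x < U.max' hne := fun x hx h =>
      lt_of_le_of_ne (U.le_max' x hx) h
    generalize U.min' hne = a at *
    generalize U.max' hne = b at *
    have hcnt : ∀ u ∈ U, (restrictDom ((Subtype.val '' (U : Set X)) \ {u.1}) D).ncard ≤ 2 ^ n := by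
      intro u hu
      have e : (Subtype.val '' (U : Set X)) \ {u.1} = Subtype.val '' ((U.erase u : Finset X) : Set X) := by
        ext x
        simp only [Set.mem_sdiff, Set.mem_image, Finset.mem_coe, Set.mem_singleton_iff,
          Finset.mem_erase]
        constructor
        · rintro ⟨⟨v, hv, rfl⟩, h⟩
          exact ⟨v, ⟨fun h' => h (by rw [h']), hv⟩, rfl⟩
        · rintro ⟨v, ⟨h, hv⟩, rfl⟩
          exact ⟨⟨v, hv, rfl⟩, fun h' => h (Subtype.ext h')⟩
      rw [e]
      refine ih _ (by rw [Finset.card_erase_of_mem hu]; omega) ?_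
      intro x hx y hy z hz
      exact hlaw x (Finset.mem_of_mem_erase hx) y (Finset.mem_of_mem_erase hy) z
        (Finset.mem_of_mem_erase hz)
    have hAX : Subtype.val '' (U : Set X) ⊆ X := by
      rintro _ ⟨v, -, rfl⟩
      exact v.2
    have hA : (Subtype.val '' (U : Set X)).Finite := U.finite_toSet.image _
    have ha := hcnt a hmU
    have hb := hcnt b hMU
    have haA : a.1 ∈ Subtype.val '' (U : Set X) := ⟨a, hmU, rfl⟩
    have hbA : b.1 ∈ Subtype.val '' (U : Set X) := ⟨b, hMU, rfl⟩
    have hab : a.1 ≠ b.1 := fun h => hlt.ne (Subtype.ext h)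
    rw [pow_succ, mul_comm]
    have lowlaw : ∀ u ∈ U, ∀ v ∈ U, u.1 ≠ a.1 → v.1 ≠ a.1 → u.1 ≠ v.1 →
        TLaw D c a.1 u.1 v.1 ∨ TLaw D c a.1 v.1 u.1 := by
      intro u hu v hv hua hva huv
      have h1 := hmin u hu fun h => hua (by rw [h])
      have h2 := hmin v hv fun h => hva (by rw [h])
      rcases lt_trichotomy u v with h | h | h
      · exact Or.inl (hlaw a hmU u hu v hv h1 h)
      · exact absurd (by rw [h]) huv
      · exact Or.inr (hlaw a hmU v hv u hu h2 h)
    have hilaw : ∀ u ∈ U, ∀ v ∈ U, u.1 ≠ b.1 → v.1 ≠ b.1 → u.1 ≠ v.1 →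
        TLaw D c u.1 v.1 b.1 ∨ TLaw D c v.1 u.1 b.1 := by
      intro u hu v hv hua hva huv
      have h1 := hmax u hu fun h => hua (by rw [h])
      have h2 := hmax v hv fun h => hva (by rw [h])
      rcases lt_trichotomy u v with h | h | h
      · exact Or.inl (hlaw u hu v hv b hMU h h2)
      · exact absurd (by rw [h]) huv
      · exact Or.inr (hlaw v hv u hu b hMU h h1)
    have midlaw : ∀ u ∈ U, u.1 ≠ a.1 → u.1 ≠ b.1 → TLaw D c a.1 u.1 b.1 := by
      intro u hu hua hub
      exact hlaw a hmU u hu b hMU (hmin u hu fun h => hua (by rw [h]))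
        (hmax u hu fun h => hub (by rw [h]))
    match c with
    | 0 =>
      refine lawMid hD hAX hA haA ?_ _ ha
      rintro r hr _ ⟨u, hu, rfl⟩ _ ⟨v, hv, rfl⟩ h1 h2 h3
      rcases lowlaw u hu v hv h1 h2 h3 with h | h <;> have := h r hr <;> tauto
    | 1 =>
      refine lawNB hD hAX hA haA ?_ _ ha
      rintro r hr _ ⟨u, hu, rfl⟩ _ ⟨v, hv, rfl⟩ h1 h2 h3
      rcases lowlaw u hu v hv h1 h2 h3 with h | h <;> have := h r hr <;> tauto
    | 2 =>
      refine lawTop hD hAX hA haA hbA hab ?_ _ ha hb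
      rintro r hr _ ⟨u, hu, rfl⟩ h1 h2
      exact midlaw u hu h1 h2 r hr
    | 3 =>
      refine lawBot hD hAX hA haA hbA hab ?_ _ ha hb
      rintro r hr _ ⟨u, hu, rfl⟩ h1 h2
      exact midlaw u hu h1 h2 r hr
    | 4 =>
      refine lawNT hD hAX hA hbA ?_ _ hb
      rintro r hr _ ⟨u, hu, rfl⟩ _ ⟨v, hv, rfl⟩ h1 h2 h3
      rcases hilaw u hu v hv h1 h2 h3 with h | h <;> have := h r hr <;> tauto
    | 5 =>
      refine lawMid hD hAX hA hbA ?_ _ hb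
      rintro r hr _ ⟨u, hu, rfl⟩ _ ⟨v, hv, rfl⟩ h1 h2 h3
      rcases hilaw u hu v hv h1 h2 h3 with h | h <;> have := h r hr <;> tauto

end laws

/-- For every `k ≥ 1` there is an `N` such that on any set of at least `N` alternatives,
no Condorcet domain is `(k,s)`-abundant for any `s > 2^(k-1)`: every Condorcet domain
has a `k`-element subset whose restriction has at most `2^(k-1)` orders. -/
theorem abundance_ceiling (k : ℕ) (hk : 1 ≤ k) :
    ∃ N : ℕ, ∀ (α : Type) (X : Set α), X.Finite → N ≤ X.ncard →
      ∀ D : Set (α → α → Prop), IsCondorcetDomain X D →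
        ∃ A : Set α, A ⊆ X ∧ A.ncard = k ∧ (restrictDom A D).ncard ≤ 2 ^ (k - 1) := by
  classical
  obtain ⟨N, hN⟩ := ramsey_aux (Fin 6) 3 k
  refine ⟨max N k, fun α X hX hcard D hD => ?_⟩
  rcases D.eq_empty_or_nonempty with rfl | ⟨r₀, hr₀⟩
  · obtain ⟨A, hA, hAk⟩ := Set.exists_subset_card_eq ((le_max_right N k).trans hcard)
    exact ⟨A, hA, hAk, by simp [restrictDom]⟩
  obtain ⟨-, hirr, htr, htot⟩ := hD.1 r₀ hr₀
  let s : X → X → Prop := fun x y => r₀ x.1 y.1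
  have : Std.Irrefl s := ⟨fun x => hirr x.1 x.2⟩
  have : IsTrans X s := ⟨fun x y z => htr x.1 x.2 y.1 y.2 z.1 z.2⟩
  have : Std.Trichotomous s := ⟨fun x y h1 h2 => by
    by_contra hne
    rcases htot x.1 x.2 y.1 y.2 (fun h => hne (Subtype.ext h)) with h | h
    · exact h1 h
    · exact h2 h⟩
  have : IsStrictTotalOrder X s := {}
  let : LinearOrder X := linearOrderOfSTO s
  have hlt : ∀ x y : X, x < y → r₀ x.1 y.1 := fun x y h => h
  let _ : Fintype X := hX.fintype
  have hex : ∀ x y z : X, x < y → y < z → ∃ c, TLaw D c x.1 y.1 z.1 := fun x y z hxy hyz =>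
    exists_law hD x.2 y.2 z.2 (fun h => hxy.ne (Subtype.ext h)) (fun h => hyz.ne (Subtype.ext h))
      (fun h => (hxy.trans hyz).ne (Subtype.ext h)) hr₀ (hlt _ _ hxy) (hlt _ _ hyz)
  let f : List X → Fin 6 := fun l => match l with
    | [x, y, z] => if h : ∃ c, TLaw D c x.1 y.1 z.1 then h.choose else 0
    | _ => 0
  obtain ⟨T, -, hTk, c, hc⟩ := hN X inferInstance Finset.univ (by
    rw [Finset.card_univ, ← Nat.card_eq_fintype_card]
    exact (le_max_left N k).trans hcard) f
  refine ⟨Subtype.val '' (T : Set X), ?_, ?_, ?_⟩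
  · rintro _ ⟨v, -, rfl⟩
    exact v.2
  · rw [Set.ncard_image_of_injective _ Subtype.val_injective, Set.ncard_coe_finset, hTk]
  · refine count_law hD.1 c (k - 1) T (by omega) ?_
    intro x hx y hy z hz hxy hyz
    have h := hc [x, y, z] (by simp [hxy, hyz, hxy.trans hyz]) rfl (by simp [hx, hy, hz])
    have he := hex x y z hxy hyz
    have h2 : f [x, y, z] = he.choose := dif_pos he
    rw [← h, h2]
    exact he.choose_spec
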